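/- For every integer n ≥ 2, the opposite-boundary doubly-refined ASM generating function satisfies: (z1−z2)·Zopp_n(x,y;z1,z2)·Z_{n−1}(x,y) = (z1−1)·z2·Z_n(x,y;z1)·Z_{n−1}(x,y;z2) − z1·(z2−1)·Z_{n−1}(x,y;z1)·Z_n(x,y;z2), as an identity of polynomials in ℤ[x,y,z1,z2]. -/

import Mathlib

open Finset

/-- The `n × n` integer matrix encoded by `e`, with entries in `{-1, 0, 1}`. -/
def asmMat {n : ℕ} (e : Fin n → Fin n → Fin 3) : Fin n → Fin n → ℤ :=
  fun i j => (e i j : ℤ) - 1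

/-- `A` is an alternating sign matrix: all entries lie in `{-1, 0, 1}`, every
partial row sum and every partial column sum is `0` or `1` (equivalently, the
nonzero entries of each row and of each column alternate in sign), and every
complete row sum and column sum is `1`. -/
def IsASM {n : ℕ} (A : Fin n → Fin n → ℤ) : Prop :=
  (∀ i j, A i j = -1 ∨ A i j = 0 ∨ A i j = 1) ∧
  (∀ (i j : Fin n), (∑ j' ∈ univ.filter (fun j' : Fin n => j' ≤ j), A i j') = 0 ∨
    (∑ j' ∈ univ.filter (fun j' : Fin n => j' ≤ j), A i j') = 1) ∧
  (∀ (i j : Fin n), (∑ i' ∈ univ.filter (fun i' : Fin n => i' ≤ i), A i' j) = 0 ∨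
    (∑ i' ∈ univ.filter (fun i' : Fin n => i' ≤ i), A i' j) = 1) ∧
  (∀ i : Fin n, (∑ j, A i j) = 1) ∧
  (∀ j : Fin n, (∑ i, A i j) = 1)

/-- `ν(A)`, the number of generalized inversions of `A`. -/
def nuASM {n : ℕ} (A : Fin n → Fin n → ℤ) : ℕ :=
  (∑ i : Fin n, ∑ i' : Fin n, ∑ j : Fin n, ∑ j' : Fin n,
      if i < i' ∧ j' ≤ j then A i j * A i' j' else 0).toNat

/-- `μ(A)`, the number of entries of `A` equal to `-1`. -/
def muASM {n : ℕ} (A : Fin n → Fin n → ℤ) : ℕ :=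
  (univ.filter (fun p : Fin n × Fin n => A p.1 p.2 = -1)).card

/-- `ρT(A)`, the number of `0`'s to the left of the `1` in the top row of `A`. -/
def rhoT {n : ℕ} (A : Fin n → Fin n → ℤ) : ℕ :=
  (univ.filter (fun j : Fin n =>
    A ⟨0, j.pos⟩ j = 0 ∧ ∃ j' : Fin n, j < j' ∧ A ⟨0, j.pos⟩ j' = 1)).card

/-- `ρR(A)`, the number of `0`'s below the `1` in the right-most column of `A`. -/
def rhoR {n : ℕ} (A : Fin n → Fin n → ℤ) : ℕ :=
  (univ.filter (fun i : Fin n =>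
    A i ⟨n - 1, Nat.sub_lt i.pos Nat.one_pos⟩ = 0 ∧
      ∃ i' : Fin n, i' < i ∧ A i' ⟨n - 1, Nat.sub_lt i.pos Nat.one_pos⟩ = 1)).card

/-- `ρB(A)`, the number of `0`'s to the right of the `1` in the bottom row of `A`. -/
def rhoB {n : ℕ} (A : Fin n → Fin n → ℤ) : ℕ :=
  (univ.filter (fun j : Fin n =>
    A ⟨n - 1, Nat.sub_lt j.pos Nat.one_pos⟩ j = 0 ∧
      ∃ j' : Fin n, j' < j ∧ A ⟨n - 1, Nat.sub_lt j.pos Nat.one_pos⟩ j' = 1)).card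

/-- `ρL(A)`, the number of `0`'s above the `1` in the left-most column of `A`. -/
def rhoL {n : ℕ} (A : Fin n → Fin n → ℤ) : ℕ :=
  (univ.filter (fun i : Fin n =>
    A i ⟨0, i.pos⟩ = 0 ∧ ∃ i' : Fin n, i < i' ∧ A i' ⟨0, i.pos⟩ = 1)).card

open Classical in
/-- The quadruply-refined ASM generating function
`Zqua_n(x,y;z1,z2,z3,z4) = Σ_A x^{ν(A)} y^{μ(A)} z1^{ρT(A)} z2^{ρR(A)} z3^{ρB(A)} z4^{ρL(A)}`. -/
noncomputable def Zqua (n : ℕ) {R : Type*} [CommRing R] (x y z1 z2 z3 z4 : R) : R :=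
  ∑ e : Fin n → Fin n → Fin 3,
    if IsASM (asmMat e) then
      x ^ nuASM (asmMat e) * y ^ muASM (asmMat e) * z1 ^ rhoT (asmMat e) *
        z2 ^ rhoR (asmMat e) * z3 ^ rhoB (asmMat e) * z4 ^ rhoL (asmMat e)
    else 0

/-- Adjacent-boundary doubly-refined generating function `Zadj_n(x,y;z1,z2)`. -/
noncomputable def Zadj (n : ℕ) {R : Type*} [CommRing R] (x y z1 z2 : R) : R :=
  Zqua n x y z1 1 1 z2

/-- Alternative adjacent-boundary doubly-refined generating function `Zbaradj_n(x,y;z1,z2)`. -/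
noncomputable def Zbaradj (n : ℕ) {R : Type*} [CommRing R] (x y z1 z2 : R) : R :=
  Zqua n x y z1 z2 1 1

/-- Triply-refined generating function `Ztri_n(x,y;z1,z2,z3)`. -/
noncomputable def Ztri (n : ℕ) {R : Type*} [CommRing R] (x y z1 z2 z3 : R) : R :=
  Zqua n x y z1 1 z2 z3

/-- Opposite-boundary doubly-refined generating function `Zopp_n(x,y;z1,z2)`. -/
noncomputable def Zopp (n : ℕ) {R : Type*} [CommRing R] (x y z1 z2 : R) : R :=
  Zqua n x y z1 1 z2 1

/-- Singly-refined generating function `Z_n(x,y;z)`. -/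
noncomputable def Zsing (n : ℕ) {R : Type*} [CommRing R] (x y z : R) : R :=
  Zqua n x y z 1 1 1

/-- Unrefined generating function `Z_n(x,y)`.  Note `Zun 0 x y = 1`. -/
noncomputable def Zun (n : ℕ) {R : Type*} [CommRing R] (x y : R) : R :=
  Zqua n x y 1 1 1 1

/-!
An alternating sign matrix is a six-vertex configuration with domain wall boundary, so its
generating functions come from a partition function in which the vertex in row `i` and column `j` is
weighted by spectral parameters `u i` and `v j` and a crossing parameter `t`. The Yang–Baxter
equation makes this partition function symmetric in the rows, and at the column values `v = u` and
`v = t * u` it reduces to a partition function with one row and one column fewer. The left-hand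
sides of two three-term relations, one between partition functions of equal sizes and one between
consecutive sizes, are of low degree in a column parameter, while these reductions make them vanish,
by a mutual induction, at two points for every row; so both relations hold. Setting all columns to
`1` and all rows but two to a common value `r`, the exceptional rows become the refinements along
the top and bottom rows, and the relation between consecutive sizes becomes the claim. Over an
algebraically closed field generic `x`, `y`, `z₁`, `z₂` arise in this way, and the identity for
indeterminates specializes to every commutative ring.
-/

section SixVertexModel

variable {K : Type*} [CommRing K]

/-- The six-vertex weight, at row parameter `u` and column parameter `v`, of a vertex whose upper
and left edges are in the states `N` and `W` and whose lower and right edges are in the states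
`N + e` and `W + e`; here `e` is the entry of the alternating sign matrix at the vertex. -/
def vertexWeight (t u v : K) (N W e : ℤ) : K :=
  if N = 0 ∧ W = 0 ∧ e = 0 then v - t * u
  else if N = 1 ∧ W = 1 ∧ e = 0 then v - t * u
  else if N = 0 ∧ W = 1 ∧ e = 0 then v - u
  else if N = 1 ∧ W = 0 ∧ e = 0 then t * (v - u)
  else if N = 0 ∧ W = 0 ∧ e = 1 then (1 - t) * u
  else if N = 1 ∧ W = 1 ∧ e = -1 then (1 - t) * v
  else 0

/-- The transfer operator of a column with parameter `v` crossing the rows `us`: `N` is the state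
of its top edge, the state of its bottom edge is `1`, and `f` and `columnOp t v us N f` are the
amplitudes as functions of the states of the horizontal edges to its right and to its left. -/
def columnOp (t v : K) : List K → ℤ → (List ℤ → K) → List ℤ → K
  | [], N, f, _ => if N = 1 then f [] else 0
  | _ :: _, _, _, [] => 0
  | u :: us, N, f, W :: s =>
      vertexWeight t u v N W (-1) * columnOp t v us (N - 1) (fun r => f ((W - 1) :: r)) s +
      vertexWeight t u v N W 0 * columnOp t v us N (fun r => f (W :: r)) s +
      vertexWeight t u v N W 1 * columnOp t v us (N + 1) (fun r => f ((W + 1) :: r)) s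

/-- The partition function of the six-vertex model with rows `us` and columns `vs`, upper edges in
the state `0`, lower and right edges in the state `1`, and prescribed states of the left edges. -/
def amplitude (t : K) (us : List K) : List K → List ℤ → K
  | [], s => if s = List.replicate us.length 1 then 1 else 0
  | v :: vs, s => columnOp t v us 0 (amplitude t us vs) s

/-- The domain wall partition function of the six-vertex model with rows `us` and columns `vs`. -/
def domainWall (t : K) (us vs : List K) : K :=
  amplitude t us vs (List.replicate us.length 0)

theorem columnOp_add (t v : K) (us : List K) (N : ℤ) (f g : List ℤ → K) (s : List ℤ) :
    columnOp t v us N (fun r => f r + g r) s = columnOp t v us N f s + columnOp t v us N g s := by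
  induction us generalizing N f g s with
  | nil => simp only [columnOp]; split_ifs <;> simp
  | cons u us ih =>
    cases s with
    | nil => simp [columnOp]
    | cons W s => simp only [columnOp, ih]; ring

theorem columnOp_mul (t v c : K) (us : List K) (N : ℤ) (f : List ℤ → K) (s : List ℤ) :
    columnOp t v us N (fun r => c * f r) s = c * columnOp t v us N f s := by
  induction us generalizing N f s with
  | nil => simp only [columnOp]; split_ifs <;> simp
  | cons u us ih =>
    cases s with
    | nil => simp [columnOp]
    | cons W s => simp only [columnOp, ih]; ring

theorem columnOp_zero (t v : K) (us : List K) (N : ℤ) (s : List ℤ) :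
    columnOp t v us N (fun _ => 0) s = 0 := by
  simpa using columnOp_mul t v 0 us N (fun _ => 0) s

theorem columnOp_congr (t v : K) (us : List K) (N : ℤ) {f g : List ℤ → K} (s : List ℤ)
    (hfg : ∀ r, r.length = us.length → f r = g r) :
    columnOp t v us N f s = columnOp t v us N g s := by
  induction us generalizing N f g s with
  | nil => simp [columnOp, hfg]
  | cons u us ih =>
    cases s with
    | nil => simp [columnOp]
    | cons W s =>
      have tail_congr (k : ℤ) (M : ℤ) : columnOp t v us M (fun r => f (k :: r)) s =
          columnOp t v us M (fun r => g (k :: r)) s :=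
        ih M s fun r hr => hfg _ (by simp [hr])
      simp only [columnOp, tail_congr]

section Map

variable {L : Type*} [CommRing L] (φ : K →+* L)

theorem map_vertexWeight (t u v : K) (N W e : ℤ) :
    φ (vertexWeight t u v N W e) = vertexWeight (φ t) (φ u) (φ v) N W e := by
  unfold vertexWeight
  split_ifs <;> simp

theorem map_columnOp (t v : K) (us : List K) (N : ℤ) (f : List ℤ → K) (s : List ℤ) :
    φ (columnOp t v us N f s) = columnOp (φ t) (φ v) (us.map φ) N (fun r => φ (f r)) s := by
  induction us generalizing N f s with
  | nil => simp [columnOp, apply_ite φ]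
  | cons u us ih =>
    cases s with
    | nil => simp [columnOp]
    | cons W s => simp only [columnOp, List.map_cons, map_add, map_mul, map_vertexWeight, ih]

theorem map_amplitude (t : K) (us vs : List K) (s : List ℤ) :
    φ (amplitude t us vs s) = amplitude (φ t) (us.map φ) (vs.map φ) s := by
  induction vs generalizing s with
  | nil => simp [amplitude, apply_ite φ]
  | cons v vs ih => simp only [amplitude, List.map_cons, map_columnOp, ih]

theorem map_domainWall (t : K) (us vs : List K) :
    φ (domainWall t us vs) = domainWall (φ t) (us.map φ) (vs.map φ) := by
  simp [domainWall, map_amplitude]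

end Map

end SixVertexModel

section RowSymmetry

open LinearMap (proj funLeft)

variable {K : Type*} [CommRing K]

/-- The `R`-matrix exchanging the parameters `u` and `w` of two adjacent rows, the upper of which
has `k` rows above it, as an operator on functions of the states of the horizontal edges. -/
def exchangeOp (t u w : K) : ℕ → (List ℤ → K) →ₗ[K] (List ℤ → K)
  | 0 => LinearMap.pi fun
    | 0 :: 0 :: s => (u - t * w) • proj (0 :: 0 :: s)
    | 1 :: 1 :: s => (u - t * w) • proj (1 :: 1 :: s)
    | 1 :: 0 :: s => ((1 - t) * u) • proj (1 :: 0 :: s) + (u - w) • proj (0 :: 1 :: s)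
    | 0 :: 1 :: s => (t * (u - w)) • proj (1 :: 0 :: s) + ((1 - t) * w) • proj (0 :: 1 :: s)
    | _ => 0
  | k + 1 => LinearMap.pi fun
    | W :: s => proj s ∘ₗ exchangeOp t u w k ∘ₗ funLeft K K (W :: ·)
    | [] => 0

theorem exchangeOp_succ_cons (t u w : K) (k : ℕ) (f : List ℤ → K) (W : ℤ) (s : List ℤ) :
    exchangeOp t u w (k + 1) f (W :: s) = exchangeOp t u w k (fun r => f (W :: r)) s :=
  rfl

/-- The Yang–Baxter equation. -/
theorem columnOp_exchangeOp_zero (t u w v : K) (us : List K) (N : ℤ) (f : List ℤ → K) :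
    columnOp t v (w :: u :: us) N (exchangeOp t u w 0 f) =
      exchangeOp t u w 0 (columnOp t v (u :: w :: us) N f) := by
  funext s
  rcases s with _ | ⟨h, _ | ⟨k, s⟩⟩
  · simp [columnOp, exchangeOp]
  · simp [columnOp, exchangeOp]
  · by_cases hN : N = 0 <;> [skip; by_cases hN1 : N = 1] <;>
    (by_cases h0 : h = 0 <;> [skip; by_cases h1 : h = 1]) <;>
    (by_cases k0 : k = 0 <;> [skip; by_cases k1 : k = 1]) <;>
    subst_vars <;>
    simp [columnOp, exchangeOp, vertexWeight, columnOp_add, columnOp_mul, columnOp_zero, *] <;>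
    ring

theorem columnOp_exchangeOp (t u w v : K) (l us : List K) (N : ℤ) (f : List ℤ → K) :
    columnOp t v (l ++ w :: u :: us) N (exchangeOp t u w l.length f) =
      exchangeOp t u w l.length (columnOp t v (l ++ u :: w :: us) N f) := by
  induction l generalizing N f with
  | nil => exact columnOp_exchangeOp_zero t u w v us N f
  | cons x l ih =>
    funext s
    rcases s with _ | ⟨W, s⟩
    · rfl
    · let term (e : ℤ) : List ℤ → K := vertexWeight t x v N W e •
        columnOp t v (l ++ u :: w :: us) (N + e) fun r => f ((W + e) :: r)
      have expand : (fun r => columnOp t v (x :: (l ++ u :: w :: us)) N f (W :: r)) =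
          term (-1) + term 0 + term 1 := by
        funext r
        simp [columnOp, term, sub_eq_add_neg]
      simp only [List.length_cons, List.cons_append, exchangeOp_succ_cons]
      rw [expand]
      simp [columnOp, exchangeOp_succ_cons, ih, term, sub_eq_add_neg]

theorem exchangeOp_apply_zeros (t u w : K) {k n : ℕ} (hn : k + 2 ≤ n) (f : List ℤ → K) :
    exchangeOp t u w k f (List.replicate n 0) = (u - t * w) * f (List.replicate n 0) := by
  induction k generalizing n f with
  | zero =>
    obtain ⟨n, rfl⟩ := Nat.exists_eq_add_of_le' hn
    simp [exchangeOp, List.replicate_succ]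
  | succ k ih =>
    obtain ⟨n, rfl⟩ := Nat.exists_eq_add_of_le' (Nat.le_of_add_left_le hn)
    rw [List.replicate_succ, exchangeOp_succ_cons, ih (by lia)]

theorem exchangeOp_indicator_ones (t u w : K) {k n : ℕ} (hn : k + 2 ≤ n) :
    exchangeOp t u w k (fun s => if s = List.replicate n 1 then 1 else 0) =
      (u - t * w) • fun s => if s = List.replicate n 1 then 1 else 0 := by
  induction k generalizing n with
  | zero =>
    obtain ⟨n, rfl⟩ := Nat.exists_eq_add_of_le' hn
    funext s
    rcases s with _ | ⟨h, _ | ⟨k, s⟩⟩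
    · simp [exchangeOp, List.replicate_succ]
    · simp [exchangeOp, List.replicate_succ]
    · by_cases h0 : h = 0 <;> [skip; by_cases h1 : h = 1] <;>
      (by_cases k0 : k = 0 <;> [skip; by_cases k1 : k = 1]) <;>
      simp [exchangeOp, List.replicate_succ, *]
  | succ k ih =>
    obtain ⟨n, rfl⟩ := Nat.exists_eq_add_of_le' (show 1 ≤ n by lia)
    funext s
    rcases s with _ | ⟨h, s⟩
    · simp [exchangeOp, List.replicate_succ]
    · by_cases h1 : h = 1
      · simpa [exchangeOp_succ_cons, List.replicate_succ, h1] using congrFun (ih (by lia)) s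
      · have zero_right : exchangeOp t u w k (fun _ => 0) = 0 := map_zero _
        simp [exchangeOp_succ_cons, List.replicate_succ, h1, zero_right]

theorem exchangeOp_amplitude (t u w : K) (l us vs : List K) :
    exchangeOp t u w l.length (amplitude t (l ++ u :: w :: us) vs) =
      (u - t * w) • amplitude t (l ++ w :: u :: us) vs := by
  induction vs with
  | nil => simpa [amplitude, funext_iff] using
      exchangeOp_indicator_ones t u w (n := (l ++ u :: w :: us).length) (by simp)
  | cons v vs ih =>
    calc exchangeOp t u w l.length (columnOp t v (l ++ u :: w :: us) 0
            (amplitude t (l ++ u :: w :: us) vs))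
        = columnOp t v (l ++ w :: u :: us) 0
            ((u - t * w) • amplitude t (l ++ w :: u :: us) vs) := by
          rw [← columnOp_exchangeOp, ih]
      _ = (u - t * w) • amplitude t (l ++ w :: u :: us) (v :: vs) :=
          funext fun s => columnOp_mul t v _ _ 0 _ s

theorem mul_domainWall_swap (t u w : K) (l us vs : List K) :
    (u - t * w) * domainWall t (l ++ u :: w :: us) vs =
      (u - t * w) * domainWall t (l ++ w :: u :: us) vs := by
  have zeros := exchangeOp_apply_zeros t u w (n := (l ++ u :: w :: us).length) (k := l.length)
    (by simp) (amplitude t (l ++ u :: w :: us) vs)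
  rw [exchangeOp_amplitude] at zeros
  simpa [domainWall] using zeros.symm

theorem domainWall_swap (t u w : K) (l us vs : List K) :
    domainWall t (l ++ u :: w :: us) vs = domainWall t (l ++ w :: u :: us) vs := by
  let φ : MvPolynomial K ℤ →+* K := (MvPolynomial.aeval id).toRingHom
  let X : K → MvPolynomial K ℤ := MvPolynomial.X
  have φ_X (x : K) : φ (X x) = x := MvPolynomial.aeval_X id x
  have map_φ_X (xs : List K) : (xs.map X).map φ = xs := by simp [Function.comp_def, φ_X]
  have cancel : X u - X t * X w ≠ 0 := fun h => by
    simpa [X] using congrArg (MvPolynomial.eval fun _ => 2) h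
  have swap := congrArg φ <| mul_left_cancel₀ cancel <|
    mul_domainWall_swap (X t) (X u) (X w) (l.map X) (us.map X) (vs.map X)
  simpa only [map_domainWall, List.map_append, List.map_cons, map_φ_X, φ_X] using swap

theorem domainWall_perm (t : K) {us us' : List K} (hp : us.Perm us') (vs : List K) :
    domainWall t us vs = domainWall t us' vs := by
  suffices ∀ l, domainWall t (l ++ us) vs = domainWall t (l ++ us') vs from this []
  induction hp with
  | nil => exact fun _ => rfl
  | cons u _ ih => exact fun l => by simpa using ih (l ++ [u])
  | swap u w us => exact fun l => domainWall_swap t w u l us vs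
  | trans _ _ ih₁ ih₂ => exact fun l => (ih₁ l).trans (ih₂ l)

end RowSymmetry

section CornerRecursion

variable {K : Type*} [CommRing K]

theorem columnOp_one_zeros (t v : K) (us : List K) (f : List ℤ → K) :
    columnOp t v us 1 f (List.replicate us.length 0) =
      (us.map fun w => t * (v - w)).prod * f (List.replicate us.length 0) := by
  induction us generalizing f with
  | nil => simp [columnOp]
  | cons u us ih => simp [columnOp, List.replicate_succ, vertexWeight, ih, mul_assoc]

theorem columnOp_cons_zeros (t v u : K) (us : List K) (f : List ℤ → K) :
    columnOp t v (u :: us) 0 f (List.replicate (us.length + 1) 0) =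
      (v - t * u) * columnOp t v us 0 (fun s => f (0 :: s)) (List.replicate us.length 0) +
      (1 - t) * u * ((us.map fun w => t * (v - w)).prod *
        f (1 :: List.replicate us.length 0)) := by
  simp [columnOp, List.replicate_succ, vertexWeight, columnOp_one_zeros]

theorem columnOp_append_one (t v u : K) (us : List K) (N : ℤ) (f : List ℤ → K) {s : List ℤ}
    (hs : s.length = us.length) :
    columnOp t v (us ++ [u]) N f (s ++ [1]) =
      (v - t * u) * columnOp t v us N (fun r => f (r ++ [1])) s := by
  induction us generalizing N f s with
  | nil =>
    obtain rfl := List.length_eq_zero_iff.1 hs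
    by_cases h1 : N = 1
    · simp [columnOp, vertexWeight, h1]
    · by_cases h0 : N = 0 <;> simp [columnOp, vertexWeight, h0, h1]
  | cons w us ih =>
    rcases s with _ | ⟨W, s⟩
    · simp at hs
    · simp only [List.cons_append, columnOp, ih _ _ (Nat.succ.inj hs)]
      ring

theorem columnOp_append_self (t u : K) (us : List K) (f : List ℤ → K) :
    columnOp t u (us ++ [u]) 0 f (List.replicate (us.length + 1) 0) =
      (1 - t) * u * (us.map fun w => u - t * w).prod * f (List.replicate us.length 0 ++ [1]) := by
  induction us generalizing f with
  | nil => simp [columnOp, vertexWeight]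
  | cons w us ih =>
    have step := columnOp_cons_zeros t u w (us ++ [u]) f
    rw [List.length_append, List.length_singleton, ih] at step
    simpa [List.replicate_succ, mul_assoc, mul_left_comm] using step

theorem amplitude_cons_one (t u : K) (us vs : List K) (s : List ℤ) :
    amplitude t (u :: us) vs (1 :: s) = (vs.map fun v => v - u).prod * amplitude t us vs s := by
  induction vs generalizing s with
  | nil => simp [amplitude, List.replicate_succ]
  | cons v vs ih => simp [amplitude, columnOp, vertexWeight, ih, columnOp_mul, mul_assoc]

theorem amplitude_append_one (t u : K) (us vs : List K) {s : List ℤ}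
    (hs : s.length = us.length) :
    amplitude t (us ++ [u]) vs (s ++ [1]) =
      (vs.map fun v => v - t * u).prod * amplitude t us vs s := by
  induction vs generalizing s with
  | nil => simp [amplitude, List.replicate_succ']
  | cons v vs ih =>
    rw [amplitude, amplitude, columnOp_append_one _ _ _ _ _ _ hs,
      columnOp_congr _ _ _ _ _ fun _ => ih, columnOp_mul]
    simp [mul_assoc]

theorem domainWall_cons_mul_self (t u : K) (us vs : List K) :
    domainWall t (u :: us) (t * u :: vs) =
      (1 - t) * u * (us.map fun w => t * (t * u - w)).prod * (vs.map fun v => v - u).prod *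
        domainWall t us vs := by
  simp only [domainWall, amplitude, List.length_cons, columnOp_cons_zeros, amplitude_cons_one]
  ring

theorem domainWall_cons_self (t u : K) (us vs : List K) :
    domainWall t (u :: us) (u :: vs) =
      (1 - t) * u * (us.map fun w => u - t * w).prod * (vs.map fun v => v - t * u).prod *
        domainWall t us vs := by
  rw [domainWall_perm t (List.perm_append_singleton u us).symm]
  simp only [domainWall, amplitude, List.length_append, List.length_singleton,
    columnOp_append_self]
  rw [amplitude_append_one _ _ _ _ (by simp)]
  ring

/-- Both corner evaluations in one formula: the factor `φ w` contributed by a further row `w`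
satisfies the same equation for `e = u` and for `e = t * u`. -/
theorem exists_domainWall_cons_eq (t : K) {u e : K} (he : e = u ∨ e = t * u) (vs : List K) :
    ∃ (κ : K) (φ : K → K), (∀ w, φ w * (u - w) = (e - t * w) * (e - w)) ∧
      ∀ us, domainWall t (u :: us) (e :: vs) = κ * (us.map φ).prod * domainWall t us vs := by
  rcases he with rfl | rfl
  · refine ⟨(1 - t) * e * (vs.map fun v => v - t * e).prod, fun w => e - t * w,
      fun w => rfl, fun us => ?_⟩
    rw [domainWall_cons_self]
    ring
  · refine ⟨(1 - t) * u * (vs.map fun v => v - u).prod, fun w => t * (t * u - w),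
      fun w => by ring, fun us => ?_⟩
    rw [domainWall_cons_mul_self]
    ring

end CornerRecursion

section ThreeTermRelations

variable {K : Type*} [CommRing K]

/-- The left-hand side of the three-term relation between partition functions with `vs.length` and
`vs.length + 1` columns. -/
def mixedRelation (t v : K) (vs : List K) (a b c : K) (us : List K) : K :=
  (a - b) * ((v - t * c) * (v - c)) *
      (domainWall t (a :: b :: us) (v :: vs) * domainWall t (c :: us) vs) +
    (b - c) * ((v - t * a) * (v - a)) *
      (domainWall t (b :: c :: us) (v :: vs) * domainWall t (a :: us) vs) +
    (c - a) * ((v - t * b) * (v - b)) *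
      (domainWall t (c :: a :: us) (v :: vs) * domainWall t (b :: us) vs)

/-- The left-hand side of the three-term (Plücker) relation between partition functions with the
same columns. -/
def plueckerRelation (t : K) (vs : List K) (a b c d : K) (us : List K) : K :=
  (a - b) * (c - d) * (domainWall t (a :: b :: us) vs * domainWall t (c :: d :: us) vs) +
    (b - c) * (a - d) * (domainWall t (b :: c :: us) vs * domainWall t (a :: d :: us) vs) +
    (c - a) * (b - d) * (domainWall t (c :: a :: us) vs * domainWall t (b :: d :: us) vs)

section Symmetries

variable (t v : K) (vs : List K) (a b c d : K)

theorem mixedRelation_perm {us us' : List K} (h : us.Perm us') :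
    mixedRelation t v vs a b c us = mixedRelation t v vs a b c us' := by
  have swap₁ (x : K) := domainWall_perm t (h.cons x) vs
  have swap₂ (x y : K) := domainWall_perm t ((h.cons y).cons x) (v :: vs)
  simp only [mixedRelation, swap₁, swap₂]

theorem mixedRelation_rotate (us : List K) :
    mixedRelation t v vs a b c us = mixedRelation t v vs b c a us := by
  unfold mixedRelation
  ring

theorem plueckerRelation_perm {us us' : List K} (h : us.Perm us') :
    plueckerRelation t vs a b c d us = plueckerRelation t vs a b c d us' := by
  have swap (x y : K) := domainWall_perm t ((h.cons y).cons x) vs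
  simp only [plueckerRelation, swap]

theorem plueckerRelation_rotate (us : List K) :
    plueckerRelation t vs a b c d us = plueckerRelation t vs b c a d us := by
  unfold plueckerRelation
  ring

theorem plueckerRelation_reverse (us : List K) :
    plueckerRelation t vs a b c d us = plueckerRelation t vs d c b a us := by
  have swap (x y : K) := domainWall_perm t (List.Perm.swap x y us) vs
  rw [plueckerRelation, plueckerRelation, swap a b, swap b c, swap c d, swap a d]
  ring

variable {L : Type*} [CommRing L] (φ : K →+* L)

theorem map_mixedRelation (us : List K) :
    φ (mixedRelation t v vs a b c us) =
      mixedRelation (φ t) (φ v) (vs.map φ) (φ a) (φ b) (φ c) (us.map φ) := by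
  simp [mixedRelation, map_domainWall]

theorem map_plueckerRelation (us : List K) :
    φ (plueckerRelation t vs a b c d us) =
      plueckerRelation (φ t) (vs.map φ) (φ a) (φ b) (φ c) (φ d) (us.map φ) := by
  simp [plueckerRelation, map_domainWall]

end Symmetries

section Corners

variable (t : K) {u e : K}

theorem mixedRelation_corner (he : e = u ∨ e = t * u) (vs : List K) (b c : K) (us : List K) :
    mixedRelation t e vs u b c us = 0 := by
  obtain ⟨κ, φ, hφ, corner⟩ := exists_domainWall_cons_eq t he vs
  have vanish : (e - t * u) * (e - u) = 0 := by rw [← hφ, sub_self, mul_zero]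
  rw [mixedRelation, vanish, domainWall_perm t (List.Perm.swap u c us), corner, corner, ← hφ b,
    ← hφ c]
  simp only [List.map_cons, List.prod_cons]
  ring

theorem exists_mixedRelation_cons_eq (he : e = u ∨ e = t * u) (vs : List K) (a b c : K)
    (us : List K) :
    ∃ k, mixedRelation t e vs a b c (u :: us) = k * plueckerRelation t vs a b c u us := by
  obtain ⟨κ, φ, hφ, corner⟩ := exists_domainWall_cons_eq t he vs
  have front (x y : K) := domainWall_perm t (List.perm_middle (a := u) (l₁ := [x, y]) (l₂ := us))
    (e :: vs)
  refine ⟨-(κ * φ a * φ b * φ c * (us.map φ).prod), ?_⟩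
  simp only [List.cons_append, List.nil_append] at front
  simp only [mixedRelation, plueckerRelation, front, corner, ← hφ, List.map_cons, List.prod_cons]
  ring

theorem exists_plueckerRelation_corner_eq (he : e = u ∨ e = t * u) (vs : List K) (b c d : K)
    (us : List K) :
    ∃ k, plueckerRelation t (e :: vs) u b c d us = k * mixedRelation t e vs b c d us := by
  obtain ⟨κ, φ, hφ, corner⟩ := exists_domainWall_cons_eq t he vs
  refine ⟨κ * (us.map φ).prod, ?_⟩
  rw [plueckerRelation, mixedRelation, domainWall_perm t (List.Perm.swap u c us),
    domainWall_perm t (List.Perm.swap b d us)]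
  simp only [corner, ← hφ, List.map_cons, List.prod_cons]
  ring

theorem exists_plueckerRelation_cons_eq (he : e = u ∨ e = t * u) (vs : List K) (a b c d : K)
    (us : List K) :
    ∃ k, plueckerRelation t (e :: vs) a b c d (u :: us) = k * plueckerRelation t vs a b c d us := by
  obtain ⟨κ, φ, -, corner⟩ := exists_domainWall_cons_eq t he vs
  have front (x y : K) := domainWall_perm t (List.perm_middle (a := u) (l₁ := [x, y]) (l₂ := us))
    (e :: vs)
  refine ⟨κ ^ 2 * φ a * φ b * φ c * φ d * (us.map φ).prod ^ 2, ?_⟩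
  simp only [List.cons_append, List.nil_append] at front
  simp only [plueckerRelation, front, corner, List.map_cons, List.prod_cons]
  ring

end Corners

section Degree

open Polynomial

theorem natDegree_columnOp_zeros_le (t u : K) (us : List K) (f : List ℤ → K) :
    (columnOp (C t) X ((u :: us).map C) 0 (fun s => C (f s))
      (List.replicate (us.length + 1) 0)).natDegree ≤ us.length := by
  induction us generalizing u f with
  | nil =>
    have const : columnOp (C t) X [C u] 0 (fun s => C (f s)) [0] = C ((1 - t) * u * f [1]) := by
      simp [columnOp, vertexWeight]
    exact (congrArg natDegree const).trans_le (natDegree_C _).le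
  | cons w us ih =>
    have prod_le (ws : List K) :
        ((ws.map C).map fun w => C t * (X - w)).prod.natDegree ≤ ws.length := by
      refine (natDegree_list_prod_le _).trans ?_
      rw [List.map_map, List.map_map]
      refine (List.sum_le_card_nsmul _ 1 ?_).trans (by simp)
      simp only [List.mem_map, Function.comp_apply, forall_exists_index, and_imp]
      rintro _ x - rfl
      compute_degree
    have expand := columnOp_cons_zeros (C t) X (C u) ((w :: us).map C) fun s => C (f s)
    rw [List.length_map] at expand
    rw [List.map_cons, expand, List.length_cons]
    refine natDegree_add_le_of_degree_le ?_ ?_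
    · exact (natDegree_mul_le_of_le (m := 1) (by compute_degree)
        (ih w fun s => f (0 :: s))).trans_eq (Nat.add_comm _ _)
    · rw [mul_comm (List.prod _), ← mul_assoc]
      refine (natDegree_mul_le_of_le (m := 0) (by compute_degree) (prod_le (w :: us))).trans ?_
      simp

theorem natDegree_domainWall_le (t u : K) (us vs : List K) :
    (domainWall (C t) ((u :: us).map C) (X :: vs.map C)).natDegree ≤ us.length := by
  simpa [domainWall, amplitude, map_amplitude] using
    natDegree_columnOp_zeros_le t u us (amplitude t (u :: us) vs)

theorem natDegree_mixedRelation_le (t : K) (vs : List K) (a b c : K) (us : List K) :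
    (mixedRelation (C t) X (vs.map C) (C a) (C b) (C c) (us.map C)).natDegree ≤
      us.length + 3 := by
  have term_le (x y z : K) : ((C x - C y) * ((X - C t * C z) * (X - C z)) *
      (domainWall (C t) ((x :: y :: us).map C) (X :: vs.map C) *
        domainWall (C t) ((z :: us).map C) (vs.map C))).natDegree ≤ us.length + 3 := by
    have top_le := natDegree_mul_le_of_le (natDegree_domainWall_le t x (y :: us) vs)
      (natDegree_C (domainWall t (z :: us) vs)).le
    rw [map_domainWall] at top_le
    refine (natDegree_mul_le_of_le (m := 2) (by compute_degree) top_le).trans ?_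
    simp only [List.length_cons]
    lia
  exact natDegree_add_le_of_degree_le
    (natDegree_add_le_of_degree_le (term_le a b c) (term_le b c a)) (term_le c a b)

theorem natDegree_plueckerRelation_le (t : K) (vs : List K) (a b c d : K) (us : List K) :
    (plueckerRelation (C t) (X :: vs.map C) (C a) (C b) (C c) (C d) (us.map C)).natDegree ≤
      2 * (us.length + 1) := by
  have term_le (x y z w : K) : ((C x - C y) * (C z - C w) *
      (domainWall (C t) ((x :: y :: us).map C) (X :: vs.map C) *
        domainWall (C t) ((z :: w :: us).map C) (X :: vs.map C))).natDegree ≤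
      2 * (us.length + 1) := by
    have product_le := natDegree_mul_le_of_le (natDegree_domainWall_le t x (y :: us) vs)
      (natDegree_domainWall_le t z (w :: us) vs)
    refine (natDegree_mul_le_of_le (m := 0) (by compute_degree) product_le).trans ?_
    simp only [List.length_cons]
    lia
  exact natDegree_add_le_of_degree_le
    (natDegree_add_le_of_degree_le (term_le a b c d) (term_le b c a d)) (term_le c a b d)

end Degree

section Vanishing

open Polynomial

/-- Row parameters `us` are generic if the `2 * us.length` points `u` and `t * u`, at which the
partition function with a row `u` reduces to a smaller one, are pairwise distinct. -/
def GenericRows (t : K) (us : List K) : Prop :=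
  (us ++ us.map (t * ·)).Nodup

theorem GenericRows.subperm {t : K} {us us' : List K} (h : GenericRows t us)
    (hs : us'.Subperm us) : GenericRows t us' := by
  obtain ⟨l, perm, sublist⟩ := hs
  exact (perm.append (perm.map _)).nodup (h.sublist (sublist.append (sublist.map _)))

variable [IsDomain K]

theorem eval_eq_zero_of_genericRows {t : K} {us : List K} (hg : GenericRows t us)
    {p : K[X]} (hp : p.natDegree < 2 * us.length)
    (hroot : ∀ u ∈ us, ∀ e, e = u ∨ e = t * u → p.eval e = 0) (v : K) : p.eval v = 0 := by
  classical
  have card : (us ++ us.map (t * ·)).toFinset.card = 2 * us.length := by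
    rw [List.toFinset_card_of_nodup hg, List.length_append, List.length_map, two_mul]
  rw [Polynomial.eq_zero_of_natDegree_lt_card_of_eval_eq_zero' p (us ++ us.map (t * ·)).toFinset
    ?_ (card ▸ hp), Polynomial.eval_zero]
  intro e he
  rcases List.mem_append.1 (List.mem_toFinset.1 he) with hu | hu
  · exact hroot e hu e (.inl rfl)
  · obtain ⟨w, hw, rfl⟩ := List.mem_map.1 hu
    exact hroot w hw _ (.inr rfl)

theorem GenericRows.mixedRelation_eq_zero {t : K} {vs : List K} {a b c : K} {us : List K}
    (hg : GenericRows t (a :: b :: c :: us))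
    (pluecker : ∀ d us', us.Perm (d :: us') → plueckerRelation t vs a b c d us' = 0) (v : K) :
    mixedRelation t v vs a b c us = 0 := by
  classical
  let p := mixedRelation (C t) X (vs.map C) (C a) (C b) (C c) (us.map C)
  have eval_p (w : K) : p.eval w = mixedRelation t w vs a b c us := by
    simpa [Function.comp_def] using
      map_mixedRelation (C t) X (vs.map C) (C a) (C b) (C c) (evalRingHom w) (us.map C)
  have degree_lt : p.natDegree < 2 * (a :: b :: c :: us).length :=
    (natDegree_mixedRelation_le t vs a b c us).trans_lt (by simp only [List.length_cons]; lia)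
  rw [← eval_p]
  refine eval_eq_zero_of_genericRows hg degree_lt (fun u hu e he => ?_) v
  rw [eval_p]
  rcases List.mem_cons.1 hu with rfl | hu
  · exact mixedRelation_corner t he vs b c us
  rcases List.mem_cons.1 hu with rfl | hu
  · rw [mixedRelation_rotate, mixedRelation_corner t he]
  rcases List.mem_cons.1 hu with rfl | hu
  · rw [← mixedRelation_rotate, mixedRelation_corner t he]
  · have perm := List.perm_cons_erase hu
    obtain ⟨k, hk⟩ := exists_mixedRelation_cons_eq t he vs a b c (us.erase u)
    rw [mixedRelation_perm t e vs a b c perm, hk, pluecker _ _ perm, mul_zero]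

theorem GenericRows.plueckerRelation_corner {t : K} {vs : List K} {a b c d : K} {us : List K}
    (hg : GenericRows t (a :: b :: c :: d :: us))
    (pluecker : ∀ {a b c d us}, GenericRows t (a :: b :: c :: d :: us) →
      plueckerRelation t vs a b c d us = 0) {e : K} (he : e = a ∨ e = t * a) :
    plueckerRelation t (e :: vs) a b c d us = 0 := by
  have hbcd : GenericRows t (b :: c :: d :: us) := hg.subperm (List.sublist_cons_self _ _).subperm
  obtain ⟨k, hk⟩ := exists_plueckerRelation_corner_eq t he vs b c d us
  rw [hk, hbcd.mixedRelation_eq_zero fun p us' perm => pluecker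
    (hbcd.subperm (((perm.symm.cons d).cons c).cons b).subperm), mul_zero]

theorem GenericRows.plueckerRelation_cons_eq_zero {t : K} {vs : List K} {a b c d : K}
    {us : List K} (hg : GenericRows t (a :: b :: c :: d :: us))
    (pluecker : ∀ {a b c d us}, GenericRows t (a :: b :: c :: d :: us) →
      plueckerRelation t vs a b c d us = 0) (v : K) :
    plueckerRelation t (v :: vs) a b c d us = 0 := by
  classical
  let p := plueckerRelation (C t) (X :: vs.map C) (C a) (C b) (C c) (C d) (us.map C)
  have eval_p (w : K) : p.eval w = plueckerRelation t (w :: vs) a b c d us := by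
    simpa [Function.comp_def] using map_plueckerRelation (C t) (X :: vs.map C) (C a) (C b) (C c)
      (C d) (evalRingHom w) (us.map C)
  have degree_lt : p.natDegree < 2 * (a :: b :: c :: d :: us).length :=
    (natDegree_plueckerRelation_le t vs a b c d us).trans_lt
      (by simp only [List.length_cons]; lia)
  rw [← eval_p]
  refine eval_eq_zero_of_genericRows hg degree_lt (fun u hu e he => ?_) v
  rw [eval_p]
  rcases List.mem_cons.1 hu with rfl | hu
  · exact hg.plueckerRelation_corner pluecker he
  rcases List.mem_cons.1 hu with rfl | hu
  · have rotated := hg.subperm (List.perm_middle (l₁ := [u, c])).subperm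
    rw [plueckerRelation_rotate, rotated.plueckerRelation_corner pluecker he]
  rcases List.mem_cons.1 hu with rfl | hu
  · have rotated := hg.subperm (List.perm_middle (l₁ := [a, b])).symm.subperm
    rw [← plueckerRelation_rotate, rotated.plueckerRelation_corner pluecker he]
  rcases List.mem_cons.1 hu with rfl | hu
  · have reversed := hg.subperm ((List.reverse_perm [a, b, c, u]).append_right us).subperm
    rw [plueckerRelation_reverse]
    exact reversed.plueckerRelation_corner pluecker he
  · have perm := List.perm_cons_erase hu
    obtain ⟨k, hk⟩ := exists_plueckerRelation_cons_eq t he vs a b c d (us.erase u)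
    rw [plueckerRelation_perm t (e :: vs) a b c d perm, hk, pluecker, mul_zero]
    exact hg.subperm (List.Sublist.subperm (by simp [List.erase_sublist]))

theorem GenericRows.plueckerRelation_eq_zero {t : K} {vs : List K} {a b c d : K} {us : List K}
    (hg : GenericRows t (a :: b :: c :: d :: us)) : plueckerRelation t vs a b c d us = 0 := by
  induction vs generalizing a b c d us with
  | nil => simp [plueckerRelation, domainWall, amplitude, List.replicate_succ]
  | cons v vs ih => exact hg.plueckerRelation_cons_eq_zero ih v

end Vanishing

section Specialization

open MvPolynomial in
theorem genericRows_X {ι : Type*} (i : ι) {l : List ι} (hl : l.Nodup) :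
    GenericRows (X i : MvPolynomial ι ℤ) (l.map X) := by
  have hX : (l.map (X : ι → MvPolynomial ι ℤ)).Nodup := hl.map (X_injective (σ := ι) (R := ℤ))
  refine hX.append (hX.map (mul_right_injective₀ (X_ne_zero i))) fun p hp hp' => ?_
  obtain ⟨j, -, rfl⟩ := List.mem_map.1 hp
  simp only [List.map_map, List.mem_map, Function.comp_apply] at hp'
  obtain ⟨k, -, hk⟩ := hp'
  simpa using congrArg (eval fun _ => 2) hk

open MvPolynomial in
theorem mixedRelation_eq_zero (t v : K) (vs : List K) (a b c : K) (us : List K) :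
    mixedRelation t v vs a b c us = 0 := by
  -- The variables `inl i` stand for the rows, which may coincide in `K`.
  let row (i : ℕ) : MvPolynomial (ℕ ⊕ K) ℤ := X (.inl i)
  let param (x : K) : MvPolynomial (ℕ ⊕ K) ℤ := X (.inr x)
  let rows := (List.range us.length).map fun i => row (i + 3)
  let φ : MvPolynomial (ℕ ⊕ K) ℤ →+* K :=
    (aeval (Sum.elim (fun i => (a :: b :: c :: us).getD i 0) id)).toRingHom
  have generic : GenericRows (param t) (row 0 :: row 1 :: row 2 :: rows) := by
    have distinct : ((List.range (us.length + 3)).map (Sum.inl : ℕ → ℕ ⊕ K)).Nodup :=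
      List.nodup_range.map Sum.inl_injective
    simpa [rows, row, List.range_succ_eq_map, Function.comp_def] using
      genericRows_X (.inr t) distinct
  have map_rows : rows.map φ = us :=
    List.ext_getElem (by simp [rows]) fun i _ hi => by simp [rows, row, φ, hi]
  have map_params : (vs.map param).map φ = vs := by simp [φ, param, Function.comp_def]
  have vanish := congrArg φ <| generic.mixedRelation_eq_zero
    (fun d us' perm => GenericRows.plueckerRelation_eq_zero <|
      generic.subperm (((perm.symm.cons _).cons _).cons _).subperm) (vs := vs.map param) (param v)
  rw [map_mixedRelation, map_rows, map_params, map_zero] at vanish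
  simpa [φ, row, param] using vanish

end Specialization

end ThreeTermRelations

section AlternatingSignMatrices

/-- The state of the upper edge of the vertex `(i, j)` in the six-vertex configuration of `A`. -/
def upperEdge {n : ℕ} (A : Fin n → Fin n → ℤ) (i j : Fin n) : ℤ :=
  ∑ i' with i' < i, A i' j

/-- The state of the left edge of the vertex `(i, j)` in the six-vertex configuration of `A`. -/
def leftEdge {n : ℕ} (A : Fin n → Fin n → ℤ) (i j : Fin n) : ℤ :=
  ∑ j' with j' < j, A i j'

theorem sum_lt_add_self {n : ℕ} (f : Fin n → ℤ) (i : Fin n) :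
    ∑ i' with i' < i, f i' + f i = ∑ i' with i' ≤ i, f i' := by
  rw [filter_gt_eq_Iio, filter_ge_eq_Iic, ← Iio_insert, sum_insert notMem_Iio_self, add_comm]

theorem upperEdge_add_self {n : ℕ} (A : Fin n → Fin n → ℤ) (i j : Fin n) :
    upperEdge A i j + A i j = ∑ i' with i' ≤ i, A i' j :=
  sum_lt_add_self (fun i' => A i' j) i

theorem leftEdge_add_self {n : ℕ} (A : Fin n → Fin n → ℤ) (i j : Fin n) :
    leftEdge A i j + A i j = ∑ j' with j' ≤ j, A i j' :=
  sum_lt_add_self (A i) j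

namespace IsASM

variable {n : ℕ} {A : Fin n → Fin n → ℤ}

theorem lowerEdge_eq_zero_or_one (hA : IsASM A) (i j : Fin n) :
    upperEdge A i j + A i j = 0 ∨ upperEdge A i j + A i j = 1 := by
  rw [upperEdge_add_self]
  exact hA.2.2.1 i j

theorem rightEdge_eq_zero_or_one (hA : IsASM A) (i j : Fin n) :
    leftEdge A i j + A i j = 0 ∨ leftEdge A i j + A i j = 1 := by
  rw [leftEdge_add_self]
  exact hA.2.1 i j

theorem transpose (hA : IsASM A) : IsASM fun i j => A j i :=
  ⟨fun i j => hA.1 j i, fun i j => hA.2.2.1 j i, fun i j => hA.2.1 j i, hA.2.2.2.2, hA.2.2.2.1⟩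

theorem upperEdge_eq_zero_or_one (hA : IsASM A) (i j : Fin n) :
    upperEdge A i j = 0 ∨ upperEdge A i j = 1 := by
  obtain ⟨_ | i, hi⟩ := i
  · left
    simp [upperEdge, Fin.lt_def]
  · have := hA.2.2.1 ⟨i, by lia⟩ j
    simpa only [upperEdge, Fin.lt_def, Fin.le_def, Nat.lt_succ_iff] using this

theorem leftEdge_eq_zero_or_one (hA : IsASM A) (i j : Fin n) :
    leftEdge A i j = 0 ∨ leftEdge A i j = 1 :=
  hA.transpose.upperEdge_eq_zero_or_one j i

end IsASM

variable {K : Type*} [CommRing K]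

theorem sum_fin_succ_arrow {M α : Type*} [AddCommMonoid M] [Fintype α] {m : ℕ}
    (F : (Fin (m + 1) → α) → M) :
    ∑ e, F e = ∑ a, ∑ e : Fin m → α, F (Fin.cons a e) := by
  rw [← (Fin.consEquiv fun _ => α).sum_comp, Fintype.sum_prod_type]
  rfl

theorem sum_lt_succ {M : Type*} [AddCommMonoid M] {m : ℕ} (f : Fin (m + 1) → M) (i : Fin m) :
    ∑ i' with i' < i.succ, f i' = f 0 + ∑ i' with i' < i, f i'.succ := by
  simp only [sum_filter, Fin.sum_univ_succ, Fin.succ_pos, if_true, Fin.succ_lt_succ_iff]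

theorem columnOp_ofFn (t v : K) {m : ℕ} (us : Fin m → K) (N : ℤ) (f : List ℤ → K)
    (s : Fin m → ℤ) :
    columnOp t v (List.ofFn us) N f (List.ofFn s) =
      ∑ e : Fin m → Fin 3,
        (∏ i, vertexWeight t (us i) v (N + ∑ i' with i' < i, ((e i' : ℤ) - 1)) (s i)
          ((e i : ℤ) - 1)) *
        if N + ∑ i, ((e i : ℤ) - 1) = 1 then f (List.ofFn fun i => s i + ((e i : ℤ) - 1))
        else 0 := by
  induction m generalizing N f with
  | zero => simp [columnOp]
  | succ m ih =>
    have entry_zero : (((0 : Fin 3) : ℕ) : ℤ) - 1 = -1 := rfl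
    have entry_one : (((1 : Fin 3) : ℕ) : ℤ) - 1 = 0 := rfl
    have entry_two : (((2 : Fin 3) : ℕ) : ℤ) - 1 = 1 := rfl
    rw [List.ofFn_succ, List.ofFn_succ, columnOp, sum_fin_succ_arrow, Fin.sum_univ_three]
    simp only [ih, Fin.prod_univ_succ, sum_lt_succ, Fin.cons_zero, Fin.cons_succ, Fin.sum_univ_succ,
      List.ofFn_succ, mul_sum, ← add_assoc, mul_assoc, Fin.not_lt_zero, filter_false, sum_empty,
      add_zero, mul_ite, mul_zero, entry_zero, entry_one, entry_two, ← sub_eq_add_neg]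

theorem amplitude_ofFn (t : K) {m n : ℕ} (us : Fin m → K) (vs : Fin n → K) (s : Fin m → ℤ) :
    amplitude t (List.ofFn us) (List.ofFn vs) (List.ofFn s) =
      ∑ e : Fin n → Fin m → Fin 3,
        (∏ j, (∏ i, vertexWeight t (us i) (vs j) (∑ i' with i' < i, ((e j i' : ℤ) - 1))
          (s i + ∑ j' with j' < j, ((e j' i : ℤ) - 1)) ((e j i : ℤ) - 1)) *
          if ∑ i, ((e j i : ℤ) - 1) = 1 then 1 else 0) *
        if ∀ i, s i + ∑ j, ((e j i : ℤ) - 1) = 1 then 1 else 0 := by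
  induction n generalizing s with
  | zero =>
    have ofFn_eq_ones : List.ofFn s = List.replicate m 1 ↔ ∀ i, s i = 1 := by
      rw [← List.ofFn_const, List.ofFn_inj, funext_iff]
    simp [amplitude, ofFn_eq_ones]
  | succ n ih =>
    rw [List.ofFn_succ, amplitude, columnOp_ofFn, sum_fin_succ_arrow]
    refine sum_congr rfl fun e _ => ?_
    rw [ih]
    simp only [Fin.prod_univ_succ, sum_lt_succ, Fin.cons_zero, Fin.cons_succ, Fin.sum_univ_succ,
      ← add_assoc, zero_add, mul_assoc]
    by_cases he : ∑ i, ((e i : ℤ) - 1) = 1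
    · simp only [he, if_true, one_mul, mul_sum, Fin.not_lt_zero, filter_false, sum_empty, add_zero]
    · simp only [he, if_false, zero_mul, mul_zero, sum_const_zero]

theorem edges_of_vertexWeight_ne_zero {t u v : K} {N W e : ℤ} (hw : vertexWeight t u v N W e ≠ 0) :
    (e = -1 ∨ e = 0 ∨ e = 1) ∧ (N + e = 0 ∨ N + e = 1) ∧ (W + e = 0 ∨ W + e = 1) := by
  unfold vertexWeight at hw
  split_ifs at hw <;> first | exact absurd rfl hw | omega

theorem isASM_of_vertexWeight_ne_zero {t : K} {n : ℕ} {us vs : Fin n → K} {A : Fin n → Fin n → ℤ}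
    (hw : ∀ i j, vertexWeight t (us i) (vs j) (upperEdge A i j) (leftEdge A i j) (A i j) ≠ 0)
    (hrow : ∀ i, ∑ j, A i j = 1) (hcol : ∀ j, ∑ i, A i j = 1) : IsASM A := by
  refine ⟨fun i j => (edges_of_vertexWeight_ne_zero (hw i j)).1, fun i j => ?_, fun i j => ?_,
    hrow, hcol⟩
  · rw [← leftEdge_add_self]
    exact (edges_of_vertexWeight_ne_zero (hw i j)).2.2
  · rw [← upperEdge_add_self]
    exact (edges_of_vertexWeight_ne_zero (hw i j)).2.1

open Classical in
theorem domainWall_ofFn (t : K) {n : ℕ} (us vs : Fin n → K) :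
    domainWall t (List.ofFn us) (List.ofFn vs) =
      ∑ e : Fin n → Fin n → Fin 3, if IsASM (asmMat e) then
        ∏ i, ∏ j, vertexWeight t (us i) (vs j) (upperEdge (asmMat e) i j)
          (leftEdge (asmMat e) i j) (asmMat e i j) else 0 := by
  have zeros : List.replicate (List.ofFn us).length (0 : ℤ) = List.ofFn fun _ : Fin n => 0 := by
    simp
  rw [domainWall, zeros, amplitude_ofFn, ← (Equiv.piComm fun _ _ => Fin 3).sum_comp]
  refine sum_congr rfl fun e _ => ?_
  simp only [Equiv.piComm_apply, Function.swap, zero_add, prod_mul_distrib]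
  change (∏ j, ∏ i, vertexWeight t (us i) (vs j) (upperEdge (asmMat e) i j)
    (leftEdge (asmMat e) i j) (asmMat e i j)) *
    (∏ j, if ∑ i, asmMat e i j = 1 then (1 : K) else 0) *
    (if ∀ i, ∑ j, asmMat e i j = 1 then (1 : K) else 0) = _
  rw [prod_comm]
  split_ifs with hrow hA hA
  · rw [prod_eq_one fun j _ => if_pos (hA.2.2.2.2 j), mul_one, mul_one]
  · by_contra hne
    rw [mul_one] at hne
    refine hA (isASM_of_vertexWeight_ne_zero (t := t) (us := us) (vs := vs) (fun i j h => ?_) hrow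
      fun j => of_not_not fun hj => ?_)
    · exact left_ne_zero_of_mul hne (prod_eq_zero (mem_univ i) (prod_eq_zero (mem_univ j) h))
    · exact right_ne_zero_of_mul hne (prod_eq_zero (mem_univ j) (if_neg hj))
  · exact absurd hA.2.2.2.1 hrow
  · simp

end AlternatingSignMatrices

section HomogeneousWeights

/-- The weight of row `i` of the alternating sign matrix `A` when all column parameters are `1` and
the parameter of the row is `s`. -/
def rowWeight {K : Type*} [CommRing K] (t s : K) {n : ℕ} (A : Fin n → Fin n → ℤ) (i : Fin n) : K :=
  ∏ j, vertexWeight t s 1 (upperEdge A i j) (leftEdge A i j) (A i j)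

section Edges

variable {n : ℕ} {A : Fin n → Fin n → ℤ}

theorem sum_upperEdge (hrow : ∀ i, ∑ j, A i j = 1) : ∑ i, ∑ j, upperEdge A i j = n.choose 2 := by
  have sum_row (i : Fin n) : ∑ j, upperEdge A i j = (i : ℕ) := by
    simp only [upperEdge]
    rw [sum_comm, sum_congr rfl fun i' _ => hrow i']
    simp [filter_gt_eq_Iio]
  rw [sum_congr rfl fun i _ => sum_row i, ← Nat.cast_sum, Fin.sum_univ_eq_sum_range fun i => i,
    sum_range_id, Nat.choose_two_right]

theorem sum_leftEdge (hcol : ∀ j, ∑ i, A i j = 1) : ∑ i, ∑ j, leftEdge A i j = n.choose 2 := by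
  rw [sum_comm]
  exact sum_upperEdge (A := fun i j => A j i) hcol

theorem IsASM.coe_nuASM (hA : IsASM A) :
    (nuASM A : ℤ) = ∑ i, ∑ j, upperEdge A i j * (leftEdge A i j + A i j) := by
  have inversions : ∑ i, ∑ i', ∑ j, ∑ j', (if i < i' ∧ j' ≤ j then A i j * A i' j' else 0) =
      ∑ i, ∑ j, upperEdge A i j * (leftEdge A i j + A i j) := by
    rw [sum_comm]
    refine sum_congr rfl fun i _ => ?_
    rw [sum_comm]
    refine sum_congr rfl fun j _ => ?_
    simp only [leftEdge_add_self, upperEdge, sum_mul_sum, sum_filter, ite_and, ite_mul, zero_mul]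
    simp only [mul_ite, mul_zero, sum_ite_irrel, sum_const_zero]
  rw [nuASM, inversions]
  refine Int.toNat_of_nonneg (sum_nonneg fun i _ => sum_nonneg fun j _ => mul_nonneg ?_ ?_)
  · have := hA.upperEdge_eq_zero_or_one i j
    lia
  · have := hA.rightEdge_eq_zero_or_one i j
    lia

theorem muASM_eq_sum (A : Fin n → Fin n → ℤ) :
    muASM A = ∑ i, ∑ j, if A i j = -1 then 1 else 0 := by
  rw [muASM, card_filter, Fintype.sum_prod_type]

end Edges

variable {K : Type*} [Field K] {t r : K}

/-- The variable `x` of the generating functions, in terms of the parameters of the homogeneous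
six-vertex model. -/
def inversionWeight (t r : K) : K :=
  (1 - t * r) ^ 2 / (t * (1 - r) ^ 2)

/-- The variable `y` of the generating functions, in terms of the parameters of the homogeneous
six-vertex model. -/
def negOneWeight (t r : K) : K :=
  (1 - t) ^ 2 * r / (t * (1 - r) ^ 2)

/-- The weight of the identity matrix of size `n` in the homogeneous six-vertex model. -/
def homogeneousFactor (t r : K) (n : ℕ) : K :=
  ((1 - t) * r) ^ n * (t * (1 - r) ^ 2) ^ n.choose 2

/-- The condition that no weight of the homogeneous six-vertex model vanishes. -/
structure Nondegenerate (t r : K) : Prop where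
  t_ne_zero : t ≠ 0
  r_ne_zero : r ≠ 0
  one_sub_t_ne_zero : 1 - t ≠ 0
  one_sub_r_ne_zero : 1 - r ≠ 0
  one_sub_mul_ne_zero : 1 - t * r ≠ 0

theorem Nondegenerate.vertexWeight_eq (h : Nondegenerate t r) {N W e : ℤ} (hN : N = 0 ∨ N = 1)
    (hW : W = 0 ∨ W = 1) (hNe : N + e = 0 ∨ N + e = 1) (hWe : W + e = 0 ∨ W + e = 1) :
    vertexWeight t r 1 N W e =
      (1 - t * r) * (t * (1 - r) / (1 - t * r)) ^ N * ((1 - r) / (1 - t * r)) ^ W *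
        ((1 - t) * r / (1 - t * r)) ^ e * inversionWeight t r ^ (N * (W + e)) *
        negOneWeight t r ^ (if e = -1 then 1 else 0) := by
  obtain ⟨ht, hr, ht1, hr1, htr⟩ := h
  have hrt : 1 - r * t ≠ 0 := by rwa [mul_comm r t]
  have he : e = -1 ∨ e = 0 ∨ e = 1 := by lia
  rcases hN with rfl | rfl <;> rcases hW with rfl | rfl <;> rcases he with rfl | rfl | rfl <;>
    first
    | lia
    | simp [vertexWeight, inversionWeight, negOneWeight] <;> field_simp

theorem prod_zpow_eq_zpow_sum {α : Type*} (s : Finset α) (f : α → ℤ) {a : K} (ha : a ≠ 0) :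
    ∏ i ∈ s, a ^ f i = a ^ ∑ i ∈ s, f i := by
  classical
  induction s using Finset.induction_on with
  | empty => simp
  | insert i s hi ih => rw [prod_insert hi, sum_insert hi, zpow_add₀ ha, ih]

theorem Nondegenerate.prod_rowWeight (h : Nondegenerate t r) {n : ℕ} {A : Fin n → Fin n → ℤ}
    (hA : IsASM A) :
    ∏ i, rowWeight t r A i =
      homogeneousFactor t r n * inversionWeight t r ^ nuASM A * negOneWeight t r ^ muASM A := by
  have weight_eq (i j : Fin n) := h.vertexWeight_eq
    (hA.upperEdge_eq_zero_or_one i j) (hA.leftEdge_eq_zero_or_one i j)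
    (hA.lowerEdge_eq_zero_or_one i j) (hA.rightEdge_eq_zero_or_one i j)
  obtain ⟨ht, hr, ht1, hr1, htr⟩ := h
  have sum_entries : ∑ i, ∑ j, A i j = n := by simp [hA.2.2.2.1]
  have card_vertices : n * n = 2 * n.choose 2 + n := by
    rw [Nat.choose_two_right, Nat.mul_div_cancel' n.even_mul_pred_self.two_dvd]
    cases n <;> simp [mul_add]
  have hx : inversionWeight t r ≠ 0 := by simp [inversionWeight, *]
  simp only [rowWeight, weight_eq, prod_mul_distrib, prod_pow_eq_pow_sum]
  simp only [prod_zpow_eq_zpow_sum _ _ hx, prod_zpow_eq_zpow_sum _ _ (div_ne_zero hr1 htr),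
    prod_zpow_eq_zpow_sum _ _ (div_ne_zero (mul_ne_zero ht hr1) htr),
    prod_zpow_eq_zpow_sum _ _ (div_ne_zero (mul_ne_zero ht1 hr) htr),
    sum_upperEdge hA.2.2.2.1, sum_leftEdge hA.2.2.2.2, sum_entries, ← hA.coe_nuASM, ← muASM_eq_sum,
    prod_const, card_univ, Fintype.card_fin, ← pow_mul, card_vertices, zpow_natCast,
    homogeneousFactor, div_pow, mul_pow]
  field_simp
  ring

end HomogeneousWeights

section BoundaryRows

variable {n : ℕ}

theorem exists_eq_indicator {f : Fin n → ℤ} (h01 : ∀ j, f j = 0 ∨ f j = 1) (hs : ∑ j, f j = 1) :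
    ∃ k, ∀ j, f j = if j = k then 1 else 0 := by
  obtain ⟨k, -, hk⟩ := exists_ne_zero_of_sum_ne_zero (hs.trans_ne one_ne_zero)
  have hk1 := (h01 k).resolve_left hk
  have sum_others : ∑ j ∈ univ.erase k, f j = 0 := by
    rw [← add_sum_erase _ _ (mem_univ k), hk1] at hs
    lia
  have others_eq_zero := (sum_eq_zero_iff_of_nonneg fun j _ => by have := h01 j; lia).1 sum_others
  refine ⟨k, fun j => ?_⟩
  split_ifs with hj
  · rw [hj, hk1]
  · exact others_eq_zero j (by simp [hj])

theorem prod_eq_pow_mul_mul_pow {M : Type*} [CommMonoid M] {k : Fin n} {a b c : M} {f : Fin n → M}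
    (hlt : ∀ j < k, f j = a) (hk : f k = b) (hgt : ∀ j > k, f j = c) :
    ∏ j, f j = a ^ (k : ℕ) * b * c ^ (n - 1 - k) := by
  have univ_eq : (univ : Finset (Fin n)) = (insert k (Iio k)).disjUnion (Ioi k)
      (disjoint_left.2 fun j => by simp) := by
    ext j
    simp [le_or_gt]
  rw [univ_eq, prod_disjUnion, prod_insert notMem_Iio_self, hk,
    prod_congr rfl fun j hj => hlt j (mem_Iio.1 hj),
    prod_congr rfl fun j hj => hgt j (mem_Ioi.1 hj), prod_const, prod_const,
    Fin.card_Iio, Fin.card_Ioi, mul_comm b]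

variable {A : Fin (n + 1) → Fin (n + 1) → ℤ}

theorem IsASM.exists_top_eq_indicator (hA : IsASM A) : ∃ k, ∀ j, A 0 j = if j = k then 1 else 0 :=
  exists_eq_indicator (fun j => by simpa [upperEdge] using hA.lowerEdge_eq_zero_or_one 0 j)
    (hA.2.2.2.1 0)

theorem upperEdge_last (hcol : ∀ j, ∑ i, A i j = 1) (j : Fin (n + 1)) :
    upperEdge A (Fin.last n) j = 1 - A (Fin.last n) j := by
  rw [eq_sub_iff_add_eq, upperEdge_add_self, ← hcol j]
  simp [Fin.le_last]

theorem IsASM.exists_bottom_eq_indicator (hA : IsASM A) :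
    ∃ k, ∀ j, A (Fin.last n) j = if j = k then 1 else 0 :=
  exists_eq_indicator
    (fun j => by
      have := hA.upperEdge_eq_zero_or_one (Fin.last n) j
      rw [upperEdge_last hA.2.2.2.2] at this
      lia)
    (hA.2.2.2.1 _)

theorem leftEdge_of_indicator {i k : Fin n} {A : Fin n → Fin n → ℤ}
    (hk : ∀ j, A i j = if j = k then 1 else 0) (j : Fin n) :
    leftEdge A i j = if k < j then 1 else 0 := by
  simp [leftEdge, hk]

theorem rhoT_of_indicator {k : Fin (n + 1)} (hk : ∀ j, A 0 j = if j = k then 1 else 0) :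
    rhoT A = k := by
  rw [← Fin.card_Iio k, rhoT]
  congr 1
  ext j
  simp only [Fin.zero_eta, hk, mem_filter_univ, mem_Iio]
  grind

theorem rhoB_of_indicator {k : Fin (n + 1)}
    (hk : ∀ j, A (Fin.last n) j = if j = k then 1 else 0) : rhoB A = n - k := by
  have card_Ioi := Fin.card_Ioi k
  rw [Nat.add_sub_cancel] at card_Ioi
  rw [← card_Ioi, rhoB]
  congr 1
  ext j
  have last_eq : (⟨n + 1 - 1, Nat.sub_lt j.pos Nat.one_pos⟩ : Fin (n + 1)) = Fin.last n := rfl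
  simp only [last_eq, hk, mem_filter_univ, mem_Ioi]
  grind

section CommRing

variable {K : Type*} [CommRing K]

theorem IsASM.rowWeight_top (hA : IsASM A) (t s : K) :
    rowWeight t s A 0 = (1 - t * s) ^ rhoT A * ((1 - t) * s) * (1 - s) ^ (n - rhoT A) := by
  obtain ⟨k, hk⟩ := hA.exists_top_eq_indicator
  have upper (j : Fin (n + 1)) : upperEdge A 0 j = 0 := by simp [upperEdge]
  simp only [rowWeight, upper, leftEdge_of_indicator hk, hk, rhoT_of_indicator hk]
  refine prod_eq_pow_mul_mul_pow (fun j hj => ?_) ?_ fun j hj => ?_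
  · simp [vertexWeight, hj.ne, hj.not_gt]
  · simp [vertexWeight]
  · have hkj : k < j := hj
    simp [vertexWeight, hkj, hkj.ne']

theorem IsASM.rowWeight_bottom (hA : IsASM A) (t s : K) :
    rowWeight t s A (Fin.last n) =
      (t * (1 - s)) ^ (n - rhoB A) * ((1 - t) * s) * (1 - t * s) ^ rhoB A := by
  obtain ⟨k, hk⟩ := hA.exists_bottom_eq_indicator
  have rho : n - rhoB A = k := by
    rw [rhoB_of_indicator hk]
    lia
  simp only [rowWeight, upperEdge_last hA.2.2.2.2, leftEdge_of_indicator hk, hk, rho]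
  rw [rhoB_of_indicator hk]
  refine prod_eq_pow_mul_mul_pow (fun j hj => ?_) ?_ fun j hj => ?_
  · simp [vertexWeight, hj.ne, hj.not_gt]
  · simp [vertexWeight]
  · have hkj : k < j := hj
    simp [vertexWeight, hkj, hkj.ne']

end CommRing

variable {K : Type*} [Field K] {t r s : K}

/-- The normalisation of a boundary row with parameter `s` relative to one with parameter `r`, in
size `n + 1`. -/
def boundaryFactor (r s : K) (n : ℕ) : K :=
  s / r * ((1 - s) / (1 - r)) ^ n

/-- The boundary variable `z` of the generating functions for a boundary row with parameter `s` in
an otherwise homogeneous model with row parameter `r`. -/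
def boundaryRatio (t r s : K) : K :=
  (1 - t * s) * (1 - r) / ((1 - s) * (1 - t * r))

theorem IsASM.rhoT_le (hA : IsASM A) : rhoT A ≤ n := by
  obtain ⟨k, hk⟩ := hA.exists_top_eq_indicator
  exact rhoT_of_indicator hk ▸ k.is_le

theorem IsASM.rhoB_le (hA : IsASM A) : rhoB A ≤ n := by
  obtain ⟨k, hk⟩ := hA.exists_bottom_eq_indicator
  exact rhoB_of_indicator hk ▸ Nat.sub_le _ _

theorem Nondegenerate.rowWeight_top (h : Nondegenerate t r) (hs : 1 - s ≠ 0) (hA : IsASM A) :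
    rowWeight t s A 0 =
      boundaryFactor r s n * boundaryRatio t r s ^ rhoT A * rowWeight t r A 0 := by
  obtain ⟨-, hr, -, hr1, htr⟩ := h
  obtain ⟨l, hl⟩ := Nat.exists_eq_add_of_le hA.rhoT_le
  rw [hA.rowWeight_top, hA.rowWeight_top, Nat.sub_eq_of_eq_add' hl]
  generalize rhoT A = k at hl
  simp only [boundaryFactor, boundaryRatio, div_pow, mul_pow, hl, pow_add]
  field_simp

theorem Nondegenerate.rowWeight_bottom (h : Nondegenerate t r) (hs : 1 - s ≠ 0) (hA : IsASM A) :
    rowWeight t s A (Fin.last n) =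
      boundaryFactor r s n * boundaryRatio t r s ^ rhoB A * rowWeight t r A (Fin.last n) := by
  obtain ⟨-, hr, -, hr1, htr⟩ := h
  obtain ⟨l, hl⟩ := Nat.exists_eq_add_of_le hA.rhoB_le
  rw [hA.rowWeight_bottom, hA.rowWeight_bottom, Nat.sub_eq_of_eq_add' hl]
  generalize rhoB A = k at hl
  simp only [boundaryFactor, boundaryRatio, div_pow, mul_pow, hl, pow_add]
  field_simp

end BoundaryRows

section GeneratingFunctions

open Classical in
theorem domainWall_ofFn_replicate_one {K : Type*} [CommRing K] (t : K) {n : ℕ} (us : Fin n → K) :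
    domainWall t (List.ofFn us) (List.replicate n 1) =
      ∑ e : Fin n → Fin n → Fin 3,
        if IsASM (asmMat e) then ∏ i, rowWeight t (us i) (asmMat e) i else 0 := by
  rw [← List.ofFn_const, domainWall_ofFn]
  rfl

/-- The difference of the two sides of the identity for the opposite-boundary generating function
of alternating sign matrices of size `n + 2`. -/
noncomputable def oppositeBoundaryRelation {R : Type*} [CommRing R] (n : ℕ) (x y z₁ z₂ : R) : R :=
  (z₁ - z₂) * Zopp (n + 2) x y z₁ z₂ * Zun (n + 1) x y -
    ((z₁ - 1) * z₂ * Zsing (n + 2) x y z₁ * Zsing (n + 1) x y z₂ -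
      z₁ * (z₂ - 1) * Zsing (n + 1) x y z₁ * Zsing (n + 2) x y z₂)

variable {K : Type*} [Field K] {t r a b : K}

namespace Nondegenerate

theorem domainWall_eq_Zopp (h : Nondegenerate t r) (n : ℕ) (ha : 1 - a ≠ 0) (hb : 1 - b ≠ 0) :
    domainWall t (a :: b :: List.replicate n r) (List.replicate (n + 2) 1) =
      homogeneousFactor t r (n + 2) * boundaryFactor r a (n + 1) * boundaryFactor r b (n + 1) *
        Zopp (n + 2) (inversionWeight t r) (negOneWeight t r)
          (boundaryRatio t r a) (boundaryRatio t r b) := by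
  let us : Fin (n + 2) → K := Fin.cons a (Fin.snoc (fun _ : Fin n => r) b : Fin (n + 1) → K)
  have ofFn_us : List.ofFn us = a :: (List.replicate n r ++ [b]) := by
    rw [List.ofFn_succ]
    simp only [us, Fin.cons_zero, Fin.cons_succ]
    rw [List.ofFn_succ']
    simp [List.ofFn_const]
  have perm : (a :: b :: List.replicate n r).Perm (List.ofFn us) := by
    rw [ofFn_us]
    exact (List.perm_append_singleton b _).symm.cons a
  rw [domainWall_perm t perm, domainWall_ofFn_replicate_one, Zopp, Zqua, mul_sum]
  refine sum_congr rfl fun e _ => ?_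
  split_ifs with hA
  · have homogeneous := h.prod_rowWeight hA
    rw [Fin.prod_univ_succ, Fin.prod_univ_castSucc] at homogeneous ⊢
    simp only [us, Fin.cons_zero, Fin.cons_succ, Fin.snoc_castSucc, Fin.snoc_last, one_pow,
      mul_one] at homogeneous ⊢
    rw [Fin.succ_last] at homogeneous ⊢
    rw [h.rowWeight_top ha hA, h.rowWeight_bottom hb hA]
    linear_combination boundaryFactor r a (n + 1) * boundaryFactor r b (n + 1) *
      boundaryRatio t r a ^ rhoT (asmMat e) * boundaryRatio t r b ^ rhoB (asmMat e) * homogeneous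
  · rw [mul_zero]

theorem domainWall_eq_Zsing (h : Nondegenerate t r) (n : ℕ) (ha : 1 - a ≠ 0) :
    domainWall t (a :: List.replicate n r) (List.replicate (n + 1) 1) =
      homogeneousFactor t r (n + 1) * boundaryFactor r a n *
        Zsing (n + 1) (inversionWeight t r) (negOneWeight t r) (boundaryRatio t r a) := by
  let us : Fin (n + 1) → K := Fin.cons a fun _ => r
  have ofFn_us : List.ofFn us = a :: List.replicate n r := by
    rw [List.ofFn_succ]
    simp [us, List.ofFn_const]
  rw [← ofFn_us, domainWall_ofFn_replicate_one, Zsing, Zqua, mul_sum]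
  refine sum_congr rfl fun e _ => ?_
  split_ifs with hA
  · have homogeneous := h.prod_rowWeight hA
    rw [Fin.prod_univ_succ] at homogeneous ⊢
    simp only [us, Fin.cons_zero, Fin.cons_succ, one_pow, mul_one] at homogeneous ⊢
    rw [h.rowWeight_top ha hA]
    linear_combination
      boundaryFactor r a n * boundaryRatio t r a ^ rhoT (asmMat e) * homogeneous
  · rw [mul_zero]

theorem domainWall_eq_Zun (h : Nondegenerate t r) (n : ℕ) :
    domainWall t (r :: List.replicate n r) (List.replicate (n + 1) 1) =
      homogeneousFactor t r (n + 1) *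
        Zun (n + 1) (inversionWeight t r) (negOneWeight t r) := by
  have factor_self : boundaryFactor r r n = 1 := by
    simp [boundaryFactor, h.r_ne_zero, h.one_sub_r_ne_zero]
  have ratio_self : boundaryRatio t r r = 1 := by
    rw [boundaryRatio, mul_comm,
      div_self (mul_ne_zero h.one_sub_r_ne_zero h.one_sub_mul_ne_zero)]
  rw [h.domainWall_eq_Zsing n h.one_sub_r_ne_zero, factor_self, ratio_self, mul_one]
  rfl

theorem mixedRelation_eq_mul_oppositeBoundaryRelation (h : Nondegenerate t r) (n : ℕ)
    (ha : 1 - a ≠ 0) (hb : 1 - b ≠ 0) :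
    mixedRelation t 1 (List.replicate (n + 1) 1) a b r (List.replicate n r) =
      homogeneousFactor t r (n + 2) * homogeneousFactor t r (n + 1) *
        boundaryFactor r a n * boundaryFactor r b n *
        (((1 - a) * (1 - b) * (1 - t * r)) ^ 2 / ((1 - r) ^ 2 * (1 - t))) *
        oppositeBoundaryRelation n (inversionWeight t r) (negOneWeight t r)
          (boundaryRatio t r a) (boundaryRatio t r b) := by
  have swap : (r :: a :: List.replicate n r).Perm (a :: List.replicate (n + 1) r) := .swap _ _ _
  have factor_succ (s : K) :
      boundaryFactor r s (n + 1) = (1 - s) / (1 - r) * boundaryFactor r s n := by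
    simp only [boundaryFactor]
    ring
  simp only [mixedRelation, ← List.replicate_succ, oppositeBoundaryRelation]
  rw [domainWall_perm t swap, h.domainWall_eq_Zopp n ha hb, List.replicate_succ,
    h.domainWall_eq_Zun, ← List.replicate_succ, h.domainWall_eq_Zsing n ha,
    h.domainWall_eq_Zsing n hb, h.domainWall_eq_Zsing (n + 1) ha,
    h.domainWall_eq_Zsing (n + 1) hb, factor_succ, factor_succ]
  generalize Zopp (n + 2) (inversionWeight t r) _ _ _ = Zopp₂
  generalize Zun (n + 1) (inversionWeight t r) _ = Zun₁
  generalize Zsing (n + 2) _ _ (boundaryRatio t r a) = Zsing₂a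
  generalize Zsing (n + 2) _ _ (boundaryRatio t r b) = Zsing₂b
  generalize Zsing (n + 1) _ _ (boundaryRatio t r a) = Zsing₁a
  generalize Zsing (n + 1) _ _ (boundaryRatio t r b) = Zsing₁b
  obtain ⟨-, -, ht1, hr1, htr⟩ := h
  simp only [boundaryRatio]
  field_simp
  ring

theorem oppositeBoundaryRelation_eq_zero (h : Nondegenerate t r) (n : ℕ) (ha₀ : a ≠ 0)
    (hb₀ : b ≠ 0) (ha : 1 - a ≠ 0) (hb : 1 - b ≠ 0) :
    oppositeBoundaryRelation n (inversionWeight t r) (negOneWeight t r)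
      (boundaryRatio t r a) (boundaryRatio t r b) = 0 := by
  have product_eq_zero := h.mixedRelation_eq_mul_oppositeBoundaryRelation n ha hb
  rw [mixedRelation_eq_zero, zero_eq_mul] at product_eq_zero
  refine product_eq_zero.resolve_left ?_
  obtain ⟨ht, hr, ht1, hr1, htr⟩ := h
  simp [homogeneousFactor, boundaryFactor, *]

end Nondegenerate

end GeneratingFunctions

section Uniformization

variable {K : Type*} [Field K]

theorem Nondegenerate.exists_boundaryRatio_eq {t r : K} (h : Nondegenerate t r) {z : K}
    (hz : 1 + z ^ 2 * inversionWeight t r - z * (1 + inversionWeight t r - negOneWeight t r) ≠ 0) :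
    ∃ s, s ≠ 0 ∧ 1 - s ≠ 0 ∧ boundaryRatio t r s = z := by
  obtain ⟨ht, -, ht1, hr1, htr⟩ := h
  have factorization : (1 - r - z * (1 - t * r)) * (t * (1 - r) - z * (1 - t * r)) =
      t * (1 - r) ^ 2 *
        (1 + z ^ 2 * inversionWeight t r - z * (1 + inversionWeight t r - negOneWeight t r)) := by
    simp only [inversionWeight, negOneWeight]
    field_simp
    ring
  obtain ⟨num_ne_zero, den_ne_zero⟩ : 1 - r - z * (1 - t * r) ≠ 0 ∧
      t * (1 - r) - z * (1 - t * r) ≠ 0 := by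
    rw [← mul_ne_zero_iff, factorization]
    exact mul_ne_zero (mul_ne_zero ht (pow_ne_zero 2 hr1)) hz
  have one_sub_s : 1 - (1 - r - z * (1 - t * r)) / (t * (1 - r) - z * (1 - t * r)) =
      -((1 - t) * (1 - r)) / (t * (1 - r) - z * (1 - t * r)) := by
    rw [one_sub_div den_ne_zero]
    ring
  have one_sub_s_ne_zero : 1 - (1 - r - z * (1 - t * r)) / (t * (1 - r) - z * (1 - t * r)) ≠ 0 :=
    one_sub_s ▸ div_ne_zero (neg_ne_zero.2 (mul_ne_zero ht1 hr1)) den_ne_zero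
  refine ⟨_, div_ne_zero num_ne_zero den_ne_zero, one_sub_s_ne_zero, ?_⟩
  rw [boundaryRatio, one_sub_s]
  field_simp
  ring

variable [IsAlgClosed K]

theorem exists_mul_one_add_sq_eq {x : K} (hx : x ≠ 0) (c : K) :
    ∃ t, x * (1 + t) ^ 2 = t * c ^ 2 := by
  have degree_ne_zero : (Polynomial.C x * Polynomial.X ^ 2 +
      Polynomial.C (2 * x - c ^ 2) * Polynomial.X + Polynomial.C x).degree ≠ 0 := by
    rw [Polynomial.degree_quadratic hx]
    decide
  obtain ⟨t, root⟩ := IsAlgClosed.exists_root _ degree_ne_zero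
  simp only [Polynomial.IsRoot.def, Polynomial.eval_add, Polynomial.eval_mul, Polynomial.eval_C,
    Polynomial.eval_pow, Polynomial.eval_X] at root
  exact ⟨t, by linear_combination root⟩

theorem exists_nondegenerate {x y : K} (hx : x ≠ 0) (hy : y ≠ 0) (hxy : 1 + x - y ≠ 0)
    (hdisc : (1 + x - y) ^ 2 - 4 * x ≠ 0) :
    ∃ t r, Nondegenerate t r ∧ inversionWeight t r = x ∧ negOneWeight t r = y := by
  obtain ⟨t, quadratic⟩ := exists_mul_one_add_sq_eq hx (1 + x - y)
  have ht : t ≠ 0 := by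
    rintro rfl
    exact hx (by linear_combination quadratic)
  have ht1 : t - 1 ≠ 0 := fun h => hdisc (by
    rw [sub_eq_zero.1 h] at quadratic
    linear_combination -quadratic)
  have ht1' : 1 + t ≠ 0 := fun h => mul_ne_zero ht (pow_ne_zero 2 hxy) (by simp [← quadratic, h])
  -- `ρ` is the square root `(1 - t * r) / (1 - r)` of `t * x`.
  obtain ⟨ρ, hρ⟩ : ∃ ρ, (1 + t) * ρ = t * (1 + x - y) := ⟨_, mul_div_cancel₀ _ ht1'⟩
  have ρ_sq : ρ ^ 2 = t * x := by
    refine mul_left_cancel₀ (pow_ne_zero 2 ht1') ?_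
    linear_combination ((1 + t) * ρ + t * (1 + x - y)) * hρ - t * quadratic
  have hρ₀ : ρ ≠ 0 := pow_ne_zero_iff two_ne_zero |>.1 (ρ_sq ▸ mul_ne_zero ht hx)
  have product_eq : (1 - ρ) * (t - ρ) = t * y := by linear_combination ρ_sq - hρ
  obtain ⟨h1ρ, htρ⟩ : 1 - ρ ≠ 0 ∧ t - ρ ≠ 0 :=
    mul_ne_zero_iff.1 (product_eq ▸ mul_ne_zero ht hy)
  have one_sub_r : 1 - (1 - ρ) / (t - ρ) = (t - 1) / (t - ρ) := by
    field_simp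
    ring
  have one_sub_mul : 1 - t * ((1 - ρ) / (t - ρ)) = ρ * (t - 1) / (t - ρ) := by
    field_simp
    ring
  refine ⟨t, (1 - ρ) / (t - ρ), ⟨ht, div_ne_zero h1ρ htρ, sub_ne_zero.2 (sub_ne_zero.1 ht1).symm,
    one_sub_r ▸ div_ne_zero ht1 htρ, one_sub_mul ▸ div_ne_zero (mul_ne_zero hρ₀ ht1) htρ⟩, ?_, ?_⟩
  · rw [inversionWeight, one_sub_r, one_sub_mul]
    field_simp
    exact ρ_sq
  · rw [negOneWeight, one_sub_r]
    field_simp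
    linear_combination (t - 1) ^ 2 * product_eq

theorem oppositeBoundaryRelation_eq_zero_of_generic {x y z₁ z₂ : K} (hx : x ≠ 0) (hy : y ≠ 0)
    (hxy : 1 + x - y ≠ 0) (hdisc : (1 + x - y) ^ 2 - 4 * x ≠ 0)
    (hz₁ : 1 + z₁ ^ 2 * x - z₁ * (1 + x - y) ≠ 0) (hz₂ : 1 + z₂ ^ 2 * x - z₂ * (1 + x - y) ≠ 0)
    (n : ℕ) : oppositeBoundaryRelation n x y z₁ z₂ = 0 := by
  obtain ⟨t, r, h, rfl, rfl⟩ := exists_nondegenerate hx hy hxy hdisc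
  obtain ⟨a, ha₀, ha, rfl⟩ := h.exists_boundaryRatio_eq hz₁
  obtain ⟨b, hb₀, hb, rfl⟩ := h.exists_boundaryRatio_eq hz₂
  exact h.oppositeBoundaryRelation_eq_zero n ha₀ hb₀ ha hb

end Uniformization

section Transfer

variable {R : Type*} [CommRing R]

theorem map_Zqua {S : Type*} [CommRing S] (φ : R →+* S) (n : ℕ) (x y z1 z2 z3 z4 : R) :
    φ (Zqua n x y z1 z2 z3 z4) = Zqua n (φ x) (φ y) (φ z1) (φ z2) (φ z3) (φ z4) := by
  simp only [Zqua, map_sum, apply_ite φ, map_mul, map_pow, map_zero]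

theorem map_oppositeBoundaryRelation {S : Type*} [CommRing S] (φ : R →+* S) (n : ℕ)
    (x y z₁ z₂ : R) :
    φ (oppositeBoundaryRelation n x y z₁ z₂) =
      oppositeBoundaryRelation n (φ x) (φ y) (φ z₁) (φ z₂) := by
  simp only [oppositeBoundaryRelation, Zopp, Zun, Zsing, map_sub, map_mul, map_one, map_Zqua]

open MvPolynomial in
theorem oppositeBoundaryRelation_X (n : ℕ) :
    oppositeBoundaryRelation n (X 0) (X 1) (X 2) (X 3 : MvPolynomial (Fin 4) ℤ) = 0 := by
  let F := FractionRing (MvPolynomial (Fin 4) ℤ)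
  let φ : MvPolynomial (Fin 4) ℤ →+* AlgebraicClosure F :=
    (algebraMap F (AlgebraicClosure F)).comp (algebraMap (MvPolynomial (Fin 4) ℤ) F)
  have φ_injective : Function.Injective φ :=
    (algebraMap F (AlgebraicClosure F)).injective.comp (IsFractionRing.injective _ F)
  have φ_ne_zero (p : MvPolynomial (Fin 4) ℤ) (hp : eval ![2, 1, 1, 1] p ≠ 0) : φ p ≠ 0 :=
    (map_ne_zero_iff φ φ_injective).2 fun h => hp (by rw [h, map_zero])
  have hxy := φ_ne_zero (1 + X 0 - X 1) (by simp)
  have hdisc := φ_ne_zero ((1 + X 0 - X 1) ^ 2 - 4 * X 0) (by simp)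
  have hz₁ := φ_ne_zero (1 + X 2 ^ 2 * X 0 - X 2 * (1 + X 0 - X 1)) (by simp)
  have hz₂ := φ_ne_zero (1 + X 3 ^ 2 * X 0 - X 3 * (1 + X 0 - X 1)) (by simp)
  simp only [map_sub, map_add, map_mul, map_pow, map_one, map_ofNat] at hxy hdisc hz₁ hz₂
  apply φ_injective
  rw [map_zero, map_oppositeBoundaryRelation]
  exact oppositeBoundaryRelation_eq_zero_of_generic (φ_ne_zero _ (by simp)) (φ_ne_zero _ (by simp))
    hxy hdisc hz₁ hz₂ n

theorem oppositeBoundaryRelation_eq_zero (n : ℕ) (x y z₁ z₂ : R) :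
    oppositeBoundaryRelation n x y z₁ z₂ = 0 := by
  simpa [map_oppositeBoundaryRelation] using
    congrArg (MvPolynomial.eval₂Hom (Int.castRingHom R) ![x, y, z₁, z₂])
      (oppositeBoundaryRelation_X n)

end Transfer

/-- Identity for the opposite-boundary doubly-refined ASM generating function,
stated for all values of the variables in any commutative ring, equivalently
as an identity of polynomials in `ℤ[x,y,z1,z2]`. -/
theorem stmt5 {R : Type*} [CommRing R] (x y z1 z2 : R) (n : ℕ) (hn : 2 ≤ n) :
    (z1 - z2) * Zopp n x y z1 z2 * Zun (n - 1) x y =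
      (z1 - 1) * z2 * Zsing n x y z1 * Zsing (n - 1) x y z2
      - z1 * (z2 - 1) * Zsing (n - 1) x y z1 * Zsing n x y z2 := by
  obtain ⟨m, rfl⟩ := Nat.exists_eq_add_of_le' hn
  exact sub_eq_zero.1 (oppositeBoundaryRelation_eq_zero m x y z1 z2)
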